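/- Let Γ be a group with finite symmetric generating set S acting by isometries on a metric space X with basepoint x₀, such that the orbit map g ↦ g x₀ is a quasi-isometric embedding from (Γ, word metric) to X. Then every infinite-order element of Γ is loxodromic for the action on X. -/

import Mathlib

open Filter

/-- The Gromov product `(y ⬝ z)_x = (d(x,y) + d(x,z) - d(y,z))/2`. -/
noncomputable def gromovProd {X : Type*} [MetricSpace X] (x y z : X) : ℝ :=
  (dist x y + dist x z - dist y z) / 2

/-- The word length of `g` with respect to a generating set `S`. -/
noncomputable def wordLength {G : Type*} [Group G] (S : Set G) (g : G) : ℕ :=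
  sInf {n | ∃ w : List G, (∀ x ∈ w, x ∈ S) ∧ w.length = n ∧ w.prod = g}

/-- The four-point form of Gromov hyperbolicity. -/
def FourPoint (X : Type*) [MetricSpace X] (δ : ℝ) : Prop :=
  ∀ x y z w : X,
    dist x z + dist y w ≤ max (dist x y + dist z w) (dist x w + dist y z) + 2 * δ

theorem fourPoint_of_gromovProd {X : Type*} [MetricSpace X] {δ : ℝ}
    (hδ : ∀ x y z w : X,
      gromovProd w x z ≥ min (gromovProd w x y) (gromovProd w y z) - δ) :
    FourPoint X δ := by
  intro x y z w
  have h := hδ x y z w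
  simp only [gromovProd] at h
  have h1 := dist_comm w x
  have h2 := dist_comm w y
  have h3 := dist_comm w z
  rcases min_cases ((dist w x + dist w y - dist x y) / 2)
    ((dist w y + dist w z - dist y z) / 2) with ⟨e, _⟩ | ⟨e, _⟩
  · rw [e] at h
    have := le_max_left (dist x y + dist z w) (dist x w + dist y z)
    linarith
  · rw [e] at h
    have := le_max_right (dist x y + dist z w) (dist x w + dist y z)
    linarith

/-- Along a sequence that moves away linearly from a virtual point whose distance function is `f`,
the Gromov products based at that point stay large. -/
theorem le_gromovProd_of_linear_growth {X : Type*} [MetricSpace X] {f : X → ℝ} {δ : ℝ}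
    (hδ0 : 0 ≤ δ)
    (hf4 : ∀ u v w, f v + dist u w ≤ max (f u + dist v w) (f w + dist u v) + 2 * δ)
    (hf : ∀ u v, f u ≤ f v + dist u v) {p : ℕ → X} {m M : ℕ} (hM : 0 < M) {a ε c : ℝ}
    (hstep : ∀ i j, i ≤ j → j ≤ m → j ≤ i + M → dist (p i) (p j) ≤ c)
    (hgrow : ∀ i ≤ m, a + ε * i ≤ f (p i)) (hε : δ ≤ ε * M) {i : ℕ} (hi : i ≤ m) :
    a + ε * i - c - δ ≤ (f (p i) + f (p m) - dist (p i) (p m)) / 2 := by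
  have near : ∀ i j, i ≤ j → j ≤ m → j ≤ i + M →
      a + ε * i - c ≤ (f (p i) + f (p j) - dist (p i) (p j)) / 2 := by
    intro i j hij hj hjM
    have h1 := hstep i j hij hj hjM
    have h2 := hgrow i (hij.trans hj)
    have h3 := hf (p i) (p j)
    linarith
  induction hk : m - i using Nat.strong_induction_on generalizing i with
  | _ k ih =>
    by_cases hiM : m ≤ i + M
    · linarith [near i m hi le_rfl hiM]
    · have h1 := near i (i + M) (by omega) (by omega) le_rfl
      have h2 := ih (m - (i + M)) (by omega) (i := i + M) (by omega) rfl
      push_cast at h2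
      have h3 := hf4 (p i) (p (i + M)) (p m)
      rcases max_cases (f (p i) + dist (p (i + M)) (p m))
        (f (p m) + dist (p i) (p (i + M))) with ⟨e, _⟩ | ⟨e, _⟩ <;> rw [e] at h3 <;>
        linarith

/-- A discrete quasi-geodesic passes close to the middle of its end points. -/
theorem exists_near_middle {X : Type*} [MetricSpace X] {δ : ℝ} (hδ0 : 0 ≤ δ)
    (h4 : FourPoint X δ) {K C : ℝ} (hK : 1 ≤ K) {M : ℕ} (hM : 0 < M)
    (hMδ : 3 * K * δ ≤ M) {p : ℕ → X} {m : ℕ}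
    (hlow : ∀ i j, i ≤ j → j ≤ m → 1 / K * ((j : ℝ) - i) - C ≤ dist (p i) (p j))
    (hup : ∀ i j, i ≤ j → j ≤ m → dist (p i) (p j) ≤ K * ((j : ℝ) - i) + C) :
    ∃ i ≤ m, dist (p 0) (p i) ≤ dist (p 0) (p m) / 2 + (3 * (K * M + C + 2 * δ) + C + 2 * δ) ∧
      dist (p m) (p i) ≤ dist (p 0) (p m) / 2 + (3 * (K * M + C + 2 * δ) + C + 2 * δ) := by
  set L := dist (p 0) (p m) with hL
  set f : X → ℝ := fun w => max (dist (p 0) w) (dist (p m) w) - L / 2 with hfdef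
  have fx : ∀ w, dist (p 0) w - L / 2 ≤ f w := fun w => by
    simp only [hfdef]; linarith [le_max_left (dist (p 0) w) (dist (p m) w)]
  have fy : ∀ w, dist (p m) w - L / 2 ≤ f w := fun w => by
    simp only [hfdef]; linarith [le_max_right (dist (p 0) w) (dist (p m) w)]
  have fcases : ∀ w, f w = dist (p 0) w - L / 2 ∨ f w = dist (p m) w - L / 2 := fun w => by
    simp only [hfdef]
    rcases max_choice (dist (p 0) w) (dist (p m) w) with e | e <;> simp [e]
  have hf : ∀ u v, f u ≤ f v + dist u v := by
    intro u v
    have h1 := dist_triangle (p 0) v u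
    have h2 := dist_triangle (p m) v u
    rw [dist_comm v u] at h1 h2
    rcases fcases u with e | e <;> linarith [fx v, fy v]
  have hf4 : ∀ u v w, f v + dist u w ≤ max (f u + dist v w) (f w + dist u v) + 2 * δ := by
    intro u v w
    have key : ∀ z : X, (∀ w, dist z w - L / 2 ≤ f w) →
        dist z v - L / 2 + dist u w ≤ max (f u + dist v w) (f w + dist u v) + 2 * δ := by
      intro z hz
      have h := h4 z u v w
      have h1 := le_max_left (f u + dist v w) (f w + dist u v)
      have h2 := le_max_right (f u + dist v w) (f w + dist u v)
      rcases max_choice (dist z u + dist v w) (dist z w + dist u v) with e | e <;>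
        rw [e] at h <;> linarith [hz u, hz w]
    rcases fcases v with e | e <;> rw [e]
    exacts [key _ fx, key _ fy]
  have hkat : ∀ u v, dist u v ≤ f u + f v + 2 * δ := by
    intro u v
    have h := h4 (p 0) u (p m) v
    rcases max_choice (dist (p 0) u + dist (p m) v) (dist (p 0) v + dist u (p m)) with e | e <;>
      rw [e] at h <;> have := dist_comm u (p m) <;> linarith [fx u, fy v, fy u, fx v]
  obtain ⟨i₀, hi₀, hmin⟩ := Finset.exists_min_image (Finset.range (m + 1)) (fun i => f (p i))
    ⟨0, by simp⟩
  simp only [Finset.mem_range, Nat.lt_succ_iff] at hi₀ hmin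
  have hKpos : 0 < K := by linarith
  have hgrow : ∀ i ≤ m, ∀ k : ℕ, 1 / K * (k : ℝ) - C ≤ dist (p i₀) (p i) →
      (f (p i₀) - C - 2 * δ) / 3 + 1 / (3 * K) * k ≤ f (p i) := by
    intro i hi k hk
    have h1 := hmin i hi
    have h2 := hkat (p i₀) (p i)
    have h3 : 1 / (3 * K) * (k : ℝ) = (1 / K * k) / 3 := by field_simp
    rw [h3]; linarith
  have hε : δ ≤ 1 / (3 * K) * M := by
    rw [one_div, inv_mul_eq_div, le_div_iff₀ (by positivity)]; linarith
  have hlen : ∀ i j : ℕ, j ≤ i + M → K * ((j : ℝ) - i) + C ≤ K * M + C := by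
    intro i j h
    have : (j : ℝ) ≤ i + M := by exact_mod_cast h
    have : K * ((j : ℝ) - i) ≤ K * M := mul_le_mul_of_nonneg_left (by linarith) hKpos.le
    linarith
  have right := le_gromovProd_of_linear_growth hδ0 hf4 hf (p := fun k => p (i₀ + k)) (m := m - i₀)
    hM (a := (f (p i₀) - C - 2 * δ) / 3) (ε := 1 / (3 * K)) (c := K * M + C)
    (fun i j hij hj hjM => (hup _ _ (by omega) (by omega)).trans (hlen _ _ (by omega)))
    (fun k hk => hgrow _ (by omega) k (by
      have := hlow i₀ (i₀ + k) (by omega) (by omega)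
      push_cast at this
      simpa using this)) hε (Nat.zero_le _)
  have left := le_gromovProd_of_linear_growth hδ0 hf4 hf (p := fun k => p (i₀ - k)) (m := i₀)
    hM (a := (f (p i₀) - C - 2 * δ) / 3) (ε := 1 / (3 * K)) (c := K * M + C)
    (fun i j hij hj hjM => by
      rw [dist_comm]
      exact (hup _ _ (by omega) (by omega)).trans (hlen _ _ (by omega)))
    (fun k hk => hgrow _ (by omega) k (by
      have := hlow (i₀ - k) i₀ (by omega) (by omega)
      rw [Nat.cast_sub hk] at this
      rw [dist_comm]
      simpa using this)) hε (Nat.zero_le _)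
  simp only [Nat.sub_zero, Nat.sub_self, Nat.add_sub_cancel' hi₀, Nat.cast_zero,
    mul_zero, add_zero] at right left
  have h0 : f (p 0) = L / 2 := by
    simp only [hfdef, dist_self, dist_comm (p m) (p 0), ← hL]
    rw [max_eq_right dist_nonneg]; ring
  have hm : f (p m) = L / 2 := by
    simp only [hfdef, dist_self, ← hL]
    rw [max_eq_left dist_nonneg]; ring
  have hfin := hf4 (p 0) (p i₀) (p m)
  rw [dist_comm (p i₀) (p 0)] at left
  have hb : f (p i₀) ≤ 3 * (K * M + C + 2 * δ) + C + 2 * δ := by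
    rcases max_choice (f (p 0) + dist (p i₀) (p m)) (f (p m) + dist (p 0) (p i₀)) with e | e <;>
      rw [e] at hfin <;> linarith
  exact ⟨i₀, hi₀, by linarith [fx (p i₀)], by linarith [fy (p i₀)]⟩

/-- If `g²` moves `x` more than `g` does, by a definite amount, then the orbit of `x` under `g`
grows linearly. -/
theorem linear_growth_of_dist_sq {X G : Type*} [MetricSpace X] [Group G] [MulAction G X] {δ : ℝ}
    (h4 : FourPoint X δ) (hδ0 : 0 ≤ δ) (hisom : ∀ γ : G, Isometry (fun x : X => γ • x))
    (g : G) (x : X) {ε : ℝ} (hε : 0 < ε)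
    (hg : dist x (g • x) + 2 * δ + ε ≤ dist x (g ^ 2 • x)) (n : ℕ) :
    n * ε ≤ dist x (g ^ (n + 1) • x) := by
  have shift : ∀ k : ℕ, ∀ i : ℕ, dist (g ^ k • x) (g ^ (k + i) • x) = dist x (g ^ i • x) := by
    intro k i
    rw [pow_add, mul_smul]; exact (hisom (g ^ k)).dist_eq _ _
  have step : ∀ n : ℕ, dist x (g ^ (n + 1) • x) + ε ≤ dist x (g ^ (n + 2) • x) := by
    intro n
    induction n with
    | zero => simp only [zero_add, pow_one]; linarith
    | succ n ih =>
      have h := h4 x (g ^ 1 • x) (g ^ 2 • x) (g ^ (n + 3) • x)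
      have e1 := shift 1 (n + 2)
      have e2 := shift 2 (n + 1)
      have e3 := shift 1 1
      rw [show 1 + (n + 2) = n + 3 by ring] at e1
      rw [show 2 + (n + 1) = n + 3 by ring] at e2
      rw [e1, e2, e3, pow_one] at h
      rw [show n + 1 + 1 = n + 2 by ring, show n + 1 + 2 = n + 3 by ring]
      rcases max_choice (dist x (g • x) + dist x (g ^ (n + 1) • x))
        (dist x (g ^ (n + 3) • x) + dist x (g • x)) with e | e <;> rw [e] at h <;> linarith
  induction n with
  | zero => simp
  | succ n ih => have := step n; push_cast; linarith

/-- An isometry moving the end points `x`, `y` at most `R` moves a point `p` that is close to a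
geodesic from `x` to `y` and far from its ends by a bounded amount, unless its square moves `p`
much further. -/
theorem dist_smul_le_of_near_geodesic {X G : Type*} [MetricSpace X] [Group G] [MulAction G X]
    {δ : ℝ} (h4 : FourPoint X δ) (hδ0 : 0 ≤ δ) (hisom : ∀ γ : G, Isometry (fun x : X => γ • x))
    (g : G) {x y p : X} {R D : ℝ} (hD : 0 ≤ D) (hR : 0 ≤ R)
    (hx : dist x (g • x) ≤ R) (hy : dist y (g • y) ≤ R)
    (hp : dist x p + dist y p ≤ dist x y + 2 * D)
    (hxp : 10 * R + 10 * D + 20 * δ < dist x p) (hyp : 10 * R + 10 * D + 20 * δ < dist y p)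
    (hsq : dist p (g ^ 2 • p) ≤ dist p (g • p) + 2 * δ) :
    dist p (g • p) ≤ 4 * D + 16 * δ := by
  have iso : ∀ (k : G) (a b : X), dist (k • a) (k • b) = dist a b := fun k a b =>
    (hisom k).dist_eq a b
  have sq : ∀ a : X, g ^ 2 • a = g • g • a := fun a => by rw [pow_two, mul_smul]
  have hx2 : dist x (g • g • x) ≤ 2 * R := by
    linarith [dist_triangle x (g • x) (g • g • x), iso g x (g • x)]
  have hy2 : dist y (g • g • y) ≤ 2 * R := by
    linarith [dist_triangle y (g • y) (g • g • y), iso g y (g • y)]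
  rw [sq] at hsq
  /- moving the end points does not matter for the excess at a far away point -/
  have excess : ∀ q x' y' : X, dist x x' ≤ 2 * R → dist y y' ≤ 2 * R → dist x' q = dist x p →
      dist y' q = dist y p → dist x' y' = dist x y →
      dist x q + dist y q ≤ dist x y + 2 * (D + 2 * δ) := by
    intro q x' y' hx' hy' hxq hyq hxy
    have t1 := dist_triangle x' x q
    have t2 := dist_triangle y' y q
    have c1 := dist_comm x x'
    have c2 := dist_comm y y'
    have h1 := h4 x' x y' q
    have h2 := h4 x y y' q
    rcases max_choice (dist x' x + dist y' q) (dist x' q + dist x y') with e | e <;>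
      rw [e] at h1 <;>
      rcases max_choice (dist x y + dist y' q) (dist x q + dist y y') with e | e <;>
      rw [e] at h2 <;> linarith
  have line : ∀ q r : X, dist x q + dist y q ≤ dist x y + 2 * (D + 2 * δ) →
      dist x r + dist y r ≤ dist x y + 2 * (D + 2 * δ) →
      dist q r ≤ |dist x q - dist x r| + 2 * (D + 2 * δ) + 2 * δ := by
    intro q r hq hr
    have h := h4 x q y r
    have := dist_comm q y
    have := le_abs_self (dist x q - dist x r)
    have := neg_le_abs (dist x q - dist x r)
    rcases max_choice (dist x q + dist y r) (dist x r + dist q y) with e | e <;>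
      rw [e] at h <;> linarith
  have e1 := excess (g • p) (g • x) (g • y) (by linarith) (by linarith) (iso _ _ _) (iso _ _ _)
    (iso _ _ _)
  have l01 := line p (g • p) (by linarith) e1
  have t1 := iso g p (g • p)
  have t2 := iso g x p
  have t3 := iso g x (g • p)
  have d1 := dist_triangle x (g • x) (g • p)
  have d2 := dist_triangle (g • x) x (g • p)
  have d3 := dist_comm x (g • x)
  have d4 := dist_triangle x (g • g • p) p
  have d5 := dist_triangle x p (g • g • p)
  have d6 := dist_comm p (g • g • p)
  have d7 : 0 ≤ dist x (g • g • p) := dist_nonneg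
  have b1 := h4 x (g • x) (g • g • p) (g • p)
  have b2 := h4 x (g • x) (g • p) (g • g • p)
  rw [dist_comm (g • g • p) (g • p)] at b1
  have habs : |dist x p - dist x (g • p)| ≤ R := abs_le.2 ⟨by linarith, by linarith⟩
  rcases max_choice (dist x (g • x) + dist (g • p) (g • g • p))
    (dist x (g • p) + dist (g • x) (g • g • p)) with e | e <;> rw [e] at b1 <;>
  rcases max_choice (dist x (g • x) + dist (g • p) (g • g • p))
    (dist x (g • g • p) + dist (g • x) (g • p)) with e | e <;> rw [e] at b2
  · linarith
  · linarith
  · linarith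
  · rcases abs_cases (dist x p - dist x (g • p)) with ⟨e, _⟩ | ⟨e, _⟩ <;> rw [e] at l01 <;> linarith

theorem wordLength_prod_le {G : Type*} [Group G] {S : Set G} {w : List G} (hw : ∀ x ∈ w, x ∈ S) :
    wordLength S w.prod ≤ w.length :=
  Nat.sInf_le ⟨w, hw, rfl, rfl⟩

theorem exists_list_length_eq_wordLength {G : Type*} [Group G] {S : Set G}
    (hsymm : ∀ s ∈ S, s⁻¹ ∈ S) (hgen : Subgroup.closure S = ⊤) (g : G) :
    ∃ w : List G, (∀ x ∈ w, x ∈ S) ∧ w.length = wordLength S g ∧ w.prod = g := by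
  have hg : g ∈ Subgroup.closure S := hgen ▸ Subgroup.mem_top g
  rw [← Subgroup.mem_toSubmonoid, Subgroup.closure_toSubmonoid] at hg
  obtain ⟨l, hl, hprod⟩ := Submonoid.exists_list_of_mem_closure hg
  refine Nat.sInf_mem (s := {n | ∃ w : List G, (∀ x ∈ w, x ∈ S) ∧ w.length = n ∧ w.prod = g})
    ⟨l.length, l, fun x hx => ?_, rfl, hprod⟩
  rcases hl x hx with h | h
  · exact h
  · simpa using hsymm _ h

theorem finite_setOf_wordLength_le {G : Type*} [Group G] {S : Set G} (hfin : S.Finite)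
    (hsymm : ∀ s ∈ S, s⁻¹ ∈ S) (hgen : Subgroup.closure S = ⊤) (N : ℕ) :
    {g : G | wordLength S g ≤ N}.Finite := by
  have := hfin.to_subtype
  refine ((List.finite_length_le S N).image fun l => (l.map Subtype.val).prod).subset ?_
  intro g hg
  obtain ⟨w, hw, hlen, hprod⟩ := exists_list_length_eq_wordLength hsymm hgen g
  lift w to List S using hw
  exact ⟨w, by simpa using hlen.trans_le hg, hprod⟩

/-- Every element is the end point of a geodesic for the word metric. -/
theorem exists_word_geodesic {G : Type*} [Group G] {S : Set G}
    (hsymm : ∀ s ∈ S, s⁻¹ ∈ S) (hgen : Subgroup.closure S = ⊤) (g : G) :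
    ∃ (p : ℕ → G) (m : ℕ), p 0 = 1 ∧ p m = g ∧
      ∀ i j, i ≤ j → j ≤ m → wordLength S ((p i)⁻¹ * p j) = j - i := by
  obtain ⟨w, hw, hlen, hprod⟩ := exists_list_length_eq_wordLength hsymm hgen g
  refine ⟨fun i => (w.take i).prod, w.length, by simp, by simpa using hprod, ?_⟩
  intro i j hij hj
  have hsplit : (w.take j).prod = (w.take i).prod * ((w.take j).drop i).prod := by
    rw [← List.prod_take_mul_prod_drop (w.take j) i, List.take_take, min_eq_left hij]
  have hmid : (w.take i).prod⁻¹ * (w.take j).prod = ((w.take j).drop i).prod := by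
    rw [hsplit, inv_mul_cancel_left]
  apply le_antisymm
  · dsimp only
    rw [hmid]
    refine (wordLength_prod_le fun x hx =>
      hw x (List.mem_of_mem_take (List.mem_of_mem_drop hx))).trans ?_
    simp [min_eq_left hj]
  · dsimp only
    obtain ⟨v, hv, hvlen, hvprod⟩ := exists_list_length_eq_wordLength hsymm hgen
      ((w.take i).prod⁻¹ * (w.take j).prod)
    have hg : (w.take i ++ v ++ w.drop j).prod = g := by
      rw [List.prod_append, List.prod_append, hvprod, mul_inv_cancel_left,
        List.prod_take_mul_prod_drop, hprod]
    have hle := wordLength_prod_le (S := S) (w := w.take i ++ v ++ w.drop j) (by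
      intro x hx
      simp only [List.mem_append] at hx
      rcases hx with (hx | hx) | hx
      exacts [hw x (List.mem_of_mem_take hx), hv x hx, hw x (List.mem_of_mem_drop hx)])
    rw [hg, ← hlen] at hle
    simp only [List.length_append, List.length_take, List.length_drop] at hle
    omega

theorem finite_setOf_dist_orbit_le {Γ : Type*} [Group Γ] {X : Type*} [MetricSpace X]
    [MulAction Γ X] {S : Set Γ} (hSfin : S.Finite) (hSsymm : ∀ s ∈ S, s⁻¹ ∈ S)
    (hSgen : Subgroup.closure S = ⊤) {x₀ : X} {K C : ℝ} (hK : 1 ≤ K)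
    (hlow : ∀ a b : Γ, (1 / K) * (wordLength S (a⁻¹ * b) : ℝ) - C ≤ dist (a • x₀) (b • x₀))
    (r : ℝ) : {g : Γ | dist x₀ (g • x₀) ≤ r}.Finite := by
  refine (finite_setOf_wordLength_le hSfin hSsymm hSgen ⌈K * (r + C)⌉₊).subset ?_
  intro g hg
  have h := hlow 1 g
  simp only [inv_one, one_mul, one_smul] at h
  have h1 : 1 / K * (wordLength S g : ℝ) ≤ r + C := by
    have : dist x₀ (g • x₀) ≤ r := hg
    linarith
  rw [one_div, inv_mul_le_iff₀ (by linarith)] at h1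
  exact_mod_cast h1.trans (Nat.le_ceil _)

/-- If some power of `γ` has an orbit growing linearly, then `γ` is loxodromic. -/
theorem liminf_dist_pow_pos {Γ : Type*} [Group Γ] {X : Type*} [MetricSpace X] [MulAction Γ X]
    (hisom : ∀ γ : Γ, Isometry (fun x : X => γ • x)) (x₀ p : X) (γ : Γ) {j : ℕ} (hj : 0 < j)
    {ε : ℝ} (hε : 0 < ε) (h : ∀ n : ℕ, n * ε ≤ dist p ((γ ^ j) ^ (n + 1) • p)) :
    0 < liminf (fun n : ℕ => dist x₀ ((γ ^ n) • x₀) / n) atTop := by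
  have hsub : Subadditive fun n : ℕ => dist x₀ (γ ^ n • x₀) := by
    intro m n
    refine (dist_triangle x₀ (γ ^ m • x₀) _).trans ?_
    rw [pow_add, mul_smul, (hisom (γ ^ m)).dist_eq]
  have hbdd : BddBelow (Set.range fun n : ℕ => dist x₀ (γ ^ n • x₀) / n) :=
    ⟨0, by rintro _ ⟨n, rfl⟩; positivity⟩
  have hlim := hsub.tendsto_lim hbdd
  rw [hlim.liminf_eq]
  have hmul : Tendsto (fun n : ℕ => j * (n + 1)) atTop atTop :=
    tendsto_atTop_mono (fun n => by dsimp only [id]; nlinarith) tendsto_id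
  have hlim' := hlim.comp hmul
  have hlow : Tendsto (fun n : ℕ => ((n : ℝ) * ε - 2 * dist x₀ p) / ((j : ℝ) * (n + 1))) atTop
      (nhds (ε / j)) := by
    have hj' : (j : ℝ) ≠ 0 := by positivity
    have h1 : Tendsto (fun n : ℕ => ε / j - (ε + 2 * dist x₀ p) / j * (1 / ((n : ℝ) + 1))) atTop
        (nhds (ε / j - (ε + 2 * dist x₀ p) / j * 0)) :=
      tendsto_const_nhds.sub (tendsto_one_div_add_atTop_nhds_zero_nat.const_mul _)
    rw [mul_zero, sub_zero] at h1
    refine h1.congr fun n => ?_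
    have : (n : ℝ) + 1 ≠ 0 := by positivity
    field_simp
    ring
  have hle := le_of_tendsto_of_tendsto' hlow hlim' fun n => by
    simp only [Function.comp, Nat.cast_mul, Nat.cast_add, Nat.cast_one]
    gcongr
    have h1 := h n
    rw [← pow_mul] at h1
    have h2 := dist_triangle4 p x₀ (γ ^ (j * (n + 1)) • x₀) (γ ^ (j * (n + 1)) • p)
    rw [(hisom (γ ^ (j * (n + 1)))).dist_eq, dist_comm p x₀] at h2
    linarith
  exact lt_of_lt_of_le (by positivity) hle

theorem infinite_order_elements_loxodromic
    {Γ : Type*} [Group Γ] {X : Type*} [MetricSpace X] (δ : ℝ)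
    (hδ : ∀ x y z w : X, gromovProd w x z ≥ min (gromovProd w x y) (gromovProd w y z) - δ)
    [MulAction Γ X] (hisom : ∀ γ : Γ, Isometry (fun x : X => γ • x))
    (S : Set Γ) (hSfin : S.Finite) (hSsymm : ∀ s ∈ S, s⁻¹ ∈ S)
    (hSgen : Subgroup.closure S = ⊤)
    (x₀ : X) (K C : ℝ) (hK : 1 ≤ K) (hC : 0 ≤ C)
    (hqi : ∀ a b : Γ,
      (1 / K) * (wordLength S (a⁻¹ * b) : ℝ) - C ≤ dist (a • x₀) (b • x₀) ∧
        dist (a • x₀) (b • x₀) ≤ K * (wordLength S (a⁻¹ * b) : ℝ) + C) :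
    ∀ γ : Γ, ¬ IsOfFinOrder γ →
      0 < Filter.liminf (fun n : ℕ => dist x₀ ((γ ^ n) • x₀) / n) Filter.atTop := by
  intro γ hγ
  have hδ0 : 0 ≤ δ := by
    have := hδ x₀ x₀ x₀ x₀
    simpa [gromovProd] using this
  have h4 := fourPoint_of_gromovProd hδ
  have hinj := injective_pow_iff_not_isOfFinOrder.2 hγ
  have hball := finite_setOf_dist_orbit_le hSfin hSsymm hSgen hK fun a b => (hqi a b).1
  by_contra hnot
  /- no power of `γ` satisfies the doubling criterion for linear growth -/
  have hsq : ∀ j : ℕ, 0 < j → ∀ p : X,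
      dist p ((γ ^ j) ^ 2 • p) ≤ dist p (γ ^ j • p) + 2 * δ := by
    intro j hj p
    by_contra! hlt
    exact hnot (liminf_dist_pow_pos hisom x₀ p γ hj (sub_pos.2 hlt)
      (linear_growth_of_dist_sq h4 hδ0 hisom _ p (sub_pos.2 hlt) (by linarith)))
  obtain ⟨M, hM⟩ := exists_nat_ge (max 1 (3 * K * δ))
  have hM0 : 0 < M := by
    have : (1 : ℝ) ≤ M := (le_max_left _ _).trans hM
    exact_mod_cast this
  set D := 3 * (K * M + C + 2 * δ) + C + 2 * δ with hD
  have hD0 : 0 ≤ D := by positivity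
  set B := {g : Γ | dist x₀ (g • x₀) ≤ 4 * D + 16 * δ} with hB
  have hBfin : B.Finite := hball _
  set J := B.ncard
  obtain ⟨R, hR⟩ := ((Finset.range (J + 1)).image fun j => dist x₀ (γ ^ j • x₀)).bddAbove
  have hR' : ∀ j ≤ J, dist x₀ (γ ^ j • x₀) ≤ R := fun j hj =>
    hR (Finset.mem_coe.2 (Finset.mem_image_of_mem _ (Finset.mem_range.2 (Nat.lt_succ_of_le hj))))
  have hR0 : 0 ≤ R := dist_nonneg.trans (hR' 0 (Nat.zero_le _))
  obtain ⟨n, hn⟩ : ∃ n : ℕ, 2 * (10 * R + 11 * D + 20 * δ) < dist x₀ (γ ^ n • x₀) := by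
    by_contra! hle
    exact Set.infinite_univ ((hball _).subset (Set.range_subset_iff.2 hle) |>.preimage
      hinj.injOn |>.subset fun n _ => ⟨n, rfl⟩)
  obtain ⟨q, m, hq0, hqm, hq⟩ := exists_word_geodesic hSsymm hSgen (γ ^ n)
  have hcast : ∀ i j, i ≤ j → j ≤ m → (wordLength S ((q i)⁻¹ * q j) : ℝ) = j - i := by
    intro i j hij hj
    rw [hq i j hij hj, Nat.cast_sub hij]
  obtain ⟨i, -, hxi, hyi⟩ := exists_near_middle hδ0 h4 hK hM0 ((le_max_right _ _).trans hM)
    (p := fun i => q i • x₀) (m := m) (C := C)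
    (fun i j hij hj => by rw [← hcast i j hij hj]; exact (hqi _ _).1)
    (fun i j hij hj => by rw [← hcast i j hij hj]; exact (hqi _ _).2)
  simp only [hq0, hqm, one_smul, ← hD] at hxi hyi
  have htri := dist_triangle_right x₀ (γ ^ n • x₀) (q i • x₀)
  have hmem : ∀ j ∈ Finset.range (J + 1), (q i)⁻¹ * γ ^ j * q i ∈ B := by
    intro j hj
    have hjJ : j ≤ J := Nat.lt_succ_iff.1 (Finset.mem_range.1 hj)
    have hmove : dist (q i • x₀) (γ ^ j • q i • x₀) =
        dist x₀ (((q i)⁻¹ * γ ^ j * q i) • x₀) := by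
      rw [← (hisom (q i)).dist_eq x₀]
      simp only [mul_smul, smul_inv_smul]
    rw [hB, Set.mem_ofPred_eq, ← hmove]
    rcases Nat.eq_zero_or_pos j with rfl | hj0
    · simp only [pow_zero, one_smul, dist_self]; positivity
    refine dist_smul_le_of_near_geodesic h4 hδ0 hisom (γ ^ j) (x := x₀) (y := γ ^ n • x₀) hD0 hR0
      (hR' j hjJ) ?_ (by linarith) (by linarith) (by linarith) (hsq j hj0 _)
    rw [← mul_smul, ← pow_add, add_comm, pow_add, mul_smul, (hisom (γ ^ n)).dist_eq]
    exact hR' j hjJ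
  have hcard := Set.ncard_le_ncard (s := (fun j => (q i)⁻¹ * γ ^ j * q i) ''
    (Finset.range (J + 1) : Set ℕ)) (t := B)
    (Set.image_subset_iff.2 fun j hj => hmem j (Finset.mem_coe.1 hj)) hBfin
  rw [Set.ncard_image_of_injective, Set.ncard_coe_finset, Finset.card_range] at hcard
  · exact absurd hcard (Nat.not_succ_le_self _)
  · intro a b hab
    exact hinj (mul_left_cancel (mul_right_cancel hab))
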